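/- arXiv:2511.14853 — 4 statements merged into one kernel-verified Lean document; each statement's English description precedes it below -/
import Mathlib

section
/- Let K ≥ 1 and a : Fin K → ℝ with a k > 0 for all k, and fix an index j < K−1. Then the integral over the open corner simplex T = {x ∈ ℝ^(K−1) : x i > 0 for all i and Σ_i x i < 1} of (x j) · ∏_{i < K−1} (x i)^(a i − 1) · (1 − Σ_i x i)^(a (K−1) − 1) equals (a j / Σ_{k < K} a k) · (∏_{k < K} Γ(a k)) / Γ(Σ_{k < K} a k). Consequently, the expectation of the j-th coordinate under the Dirichlet distribution with parameter a equals a j / a₀ where a₀ = Σ_k a k; with the posterior parameter a = n⁰·y⁰ + κ of Theorem 1 this yields the posterior mean formula E[θ_k | κ, n⁰] = (n⁰ y⁰_k + κ_k)/(n⁰ + n). -/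
open MeasureTheory

/-!
The Dirichlet kernel `∏ θ_k ^ (a_k - 1)` has total mass `B(a) = ∏ Γ(a_k) / Γ(∑ a_k)` on the simplex.
By Tonelli, freezing the first coordinate at `t` leaves a Dirichlet kernel on the simplex of size
`1 - t`, so induction on the dimension, run over simplices of all sizes `s`, reduces the mass to
Euler's beta integral. Multiplying the kernel by `θ_k` raises the parameter `a_k` by one, and
`Γ(x + 1) = x Γ(x)` turns `B(a + e_k) / B(a)` into `a_k / ∑ a_i`.
-/

open ProbabilityTheory (beta beta_pos)

section BetaIntegral

variable {u v s : ℝ}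

lemma integral_rpow_mul_sub_rpow (hu : 0 < u) (hv : 0 < v) (hs : 0 < s) :
    ∫ x in Set.Ioo 0 s, x ^ (u - 1) * (s - x) ^ (v - 1) = s ^ (u + v - 1) * beta u v := by
  have complex_form : ∫ x in Set.Ioo 0 s, (x : ℂ) ^ ((u : ℂ) - 1) * ((s : ℂ) - x) ^ ((v : ℂ) - 1) =
      (s : ℂ) ^ ((u : ℂ) + v - 1) * Complex.betaIntegral u v := by
    rw [← Complex.betaIntegral_scaled u v hs, intervalIntegral.integral_of_le hs.le,
      integral_Ioc_eq_integral_Ioo]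
  have integrand_ofReal : ∀ x ∈ Set.Ioo 0 s,
      (x : ℂ) ^ ((u : ℂ) - 1) * ((s : ℂ) - x) ^ ((v : ℂ) - 1) =
        ((x ^ (u - 1) * (s - x) ^ (v - 1) : ℝ) : ℂ) := fun x hx ↦ by
    rw [Complex.ofReal_mul, Complex.ofReal_cpow hx.1.le, Complex.ofReal_cpow (sub_pos.2 hx.2).le]
    push_cast
    rfl
  have scale_ofReal : (s : ℂ) ^ ((u : ℂ) + v - 1) = ((s ^ (u + v - 1) : ℝ) : ℂ) := by
    rw [Complex.ofReal_cpow hs.le]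
    push_cast
    rfl
  rw [setIntegral_congr_fun measurableSet_Ioo integrand_ofReal, integral_complex_ofReal,
    scale_ofReal] at complex_form
  rw [ProbabilityTheory.beta_eq_betaIntegralReal u v hu hv, ← Complex.re_ofReal_mul,
    ← complex_form, Complex.ofReal_re]

lemma lintegral_rpow_mul_sub_rpow (hu : 0 < u) (hv : 0 < v) (hs : 0 < s) :
    ∫⁻ x in Set.Ioo 0 s, ENNReal.ofReal (x ^ (u - 1) * (s - x) ^ (v - 1)) =
      ENNReal.ofReal (s ^ (u + v - 1) * beta u v) := by
  have value := integral_rpow_mul_sub_rpow hu hv hs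
  have integrable : IntegrableOn (fun x ↦ x ^ (u - 1) * (s - x) ^ (v - 1)) (Set.Ioo 0 s) :=
    .of_integral_ne_zero
      (value ▸ (mul_pos (Real.rpow_pos_of_pos hs _) (beta_pos hu hv)).ne')
  rw [← value, ofReal_integral_eq_lintegral_ofReal integrable]
  exact ae_restrict_of_forall_mem measurableSet_Ioo fun x hx ↦
    mul_nonneg (Real.rpow_nonneg hx.1.le _) (Real.rpow_nonneg (sub_pos.2 hx.2).le _)

end BetaIntegral

section MultivariateBeta

variable {ι : Type*} [Fintype ι] {a : ι → ℝ}

/-- The multivariate beta function `B(a) = ∏ Γ(a i) / Γ(∑ a i)`, the normalizing constant of the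
Dirichlet distribution with parameter `a`. -/
noncomputable def multivariateBeta (a : ι → ℝ) : ℝ :=
  (∏ i, Real.Gamma (a i)) / Real.Gamma (∑ i, a i)

lemma multivariateBeta_pos [Nonempty ι] (ha : ∀ i, 0 < a i) : 0 < multivariateBeta a :=
  div_pos (Finset.prod_pos fun i _ ↦ Real.Gamma_pos_of_pos (ha i))
    (Real.Gamma_pos_of_pos (Finset.sum_pos (fun i _ ↦ ha i) Finset.univ_nonempty))

lemma multivariateBeta_add_single [DecidableEq ι] {k : ι} (hk : a k ≠ 0) (hsum : ∑ i, a i ≠ 0) :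
    multivariateBeta (a + Pi.single k 1) = a k / (∑ i, a i) * multivariateBeta a := by
  have gamma_shift : ∀ i, Real.Gamma ((a + Pi.single k 1 : ι → ℝ) i) =
      Pi.mulSingle (M := fun _ ↦ ℝ) k (a k) i * Real.Gamma (a i) := fun i ↦ by
    obtain rfl | hi := eq_or_ne i k
    · simp [Real.Gamma_add_one hk]
    · simp [hi]
  have sum_shift : ∑ i, (a + Pi.single k 1 : ι → ℝ) i = ∑ i, a i + 1 := by
    simp [Finset.sum_add_distrib]
  rw [multivariateBeta, multivariateBeta, sum_shift, Real.Gamma_add_one hsum,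
    Finset.prod_congr rfl fun i _ ↦ gamma_shift i, Finset.prod_mul_distrib,
    Fintype.prod_pi_mulSingle', mul_div_mul_comm]

lemma multivariateBeta_succ {n : ℕ} (a : Fin (n + 1) → ℝ) (htail : 0 < ∑ i, Fin.tail a i) :
    multivariateBeta a = beta (a 0) (∑ i, Fin.tail a i) * multivariateBeta (Fin.tail a) := by
  have gamma_tail := (Real.Gamma_pos_of_pos htail).ne'
  rw [multivariateBeta, multivariateBeta, beta, Fin.prod_univ_succ, Fin.sum_univ_succ]
  simp only [Fin.tail] at gamma_tail ⊢
  field_simp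

end MultivariateBeta

section CornerSimplex

variable {n : ℕ} {s t : ℝ}

/-- The coordinates `(x_0, …, x_{n-1}, s - ∑ x_i)` of the point of the simplex `∑ θ_k = s`
parametrized by its first `n` coordinates `x`. -/
def simplexCoords (s : ℝ) (x : Fin n → ℝ) : Fin (n + 1) → ℝ :=
  Fin.snoc x (s - ∑ i, x i)

@[simp]
lemma simplexCoords_castSucc (s : ℝ) (x : Fin n → ℝ) (i : Fin n) :
    simplexCoords s x i.castSucc = x i :=
  Fin.snoc_castSucc ..

@[simp]
lemma simplexCoords_last (s : ℝ) (x : Fin n → ℝ) :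
    simplexCoords s x (Fin.last n) = s - ∑ i, x i :=
  Fin.snoc_last ..

lemma sum_simplexCoords (s : ℝ) (x : Fin n → ℝ) : ∑ k, simplexCoords s x k = s := by
  simp [Fin.sum_univ_castSucc]

lemma simplexCoords_cons (s t : ℝ) (y : Fin n → ℝ) :
    simplexCoords s (Fin.cons t y) = Fin.cons t (simplexCoords (s - t) y) := by
  rw [simplexCoords, simplexCoords, Fin.cons_snoc_eq_snoc_cons, Fin.sum_cons, sub_sub]

@[fun_prop]
lemma measurable_simplexCoords (s : ℝ) (k : Fin (n + 1)) :
    Measurable fun x : Fin n → ℝ ↦ simplexCoords s x k := by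
  induction k using Fin.lastCases with
  | last => simp only [simplexCoords_last]; fun_prop
  | cast i => simp only [simplexCoords_castSucc]; fun_prop

/-- The open corner simplex of size `s`: the parameters `x` for which all `n + 1` simplex
coordinates are positive. -/
def cornerSimplex (n : ℕ) (s : ℝ) : Set (Fin n → ℝ) :=
  {x | ∀ k, 0 < simplexCoords s x k}

lemma cornerSimplex_eq (n : ℕ) (s : ℝ) :
    cornerSimplex n s = {x | (∀ i, 0 < x i) ∧ ∑ i, x i < s} := by
  ext x
  simp [cornerSimplex, Fin.forall_fin_succ']

lemma measurableSet_cornerSimplex (n : ℕ) (s : ℝ) : MeasurableSet (cornerSimplex n s) :=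
  measurableSet_setOfPred.2 <| .forall fun k ↦
    measurableSet_setOfPred.1 <| measurableSet_lt measurable_const (measurable_simplexCoords s k)

lemma cons_mem_cornerSimplex {y : Fin n → ℝ} :
    (Fin.cons t y : Fin (n + 1) → ℝ) ∈ cornerSimplex (n + 1) s ↔
      t ∈ Set.Ioo 0 s ∧ y ∈ cornerSimplex n (s - t) := by
  have size_pos (hy : y ∈ cornerSimplex n (s - t)) : 0 < s - t :=
    sum_simplexCoords (s - t) y ▸ Finset.sum_pos (fun k _ ↦ hy k) Finset.univ_nonempty
  simp only [cornerSimplex, Set.mem_ofPred_eq, simplexCoords_cons, Fin.forall_fin_succ (n := n + 1),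
    Fin.cons_zero, Fin.cons_succ, Set.mem_Ioo] at size_pos ⊢
  exact ⟨fun ⟨ht, hy⟩ ↦ ⟨⟨ht, sub_pos.1 (size_pos hy)⟩, hy⟩, fun ⟨ht, hy⟩ ↦ ⟨ht.1, hy⟩⟩

lemma lintegral_fin_succ {α : Type*} [MeasureSpace α] [SigmaFinite (volume : Measure α)]
    {f : (Fin (n + 1) → α) → ENNReal} (hf : Measurable f) :
    ∫⁻ x, f x = ∫⁻ t, ∫⁻ y, f (Fin.cons t y) := by
  have split := (volume_preserving_piFinSuccAbove (fun _ : Fin (n + 1) ↦ α) 0).symm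
  rw [← split.lintegral_comp hf, Measure.volume_eq_prod, lintegral_prod]
  · simp [MeasurableEquiv.piFinSuccAbove_symm_apply, Fin.insertNthEquiv]
  · exact (hf.comp (MeasurableEquiv.measurable _)).aemeasurable

lemma lintegral_cornerSimplex_succ {f : (Fin (n + 1) → ℝ) → ENNReal} (hf : Measurable f) :
    ∫⁻ x in cornerSimplex (n + 1) s, f x =
      ∫⁻ t in Set.Ioo 0 s, ∫⁻ y in cornerSimplex n (s - t), f (Fin.cons t y) := by
  simp only [← lintegral_indicator (measurableSet_cornerSimplex _ _),
    ← lintegral_indicator measurableSet_Ioo]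
  rw [lintegral_fin_succ (hf.indicator (measurableSet_cornerSimplex _ _))]
  refine lintegral_congr fun t ↦ ?_
  classical
  by_cases ht : t ∈ Set.Ioo 0 s <;> simp [Set.indicator_apply, cons_mem_cornerSimplex, ht]

end CornerSimplex

section DirichletKernel

variable {n : ℕ} {s : ℝ}

/-- The unnormalized Dirichlet density `∏ θ_k ^ (a_k - 1)` on the simplex `∑ θ_k = s`, as a function
of the first `n` coordinates `x` of `θ`. -/
noncomputable def dirichletKernel (a : Fin (n + 1) → ℝ) (s : ℝ) (x : Fin n → ℝ) : ℝ :=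
  ∏ k, simplexCoords s x k ^ (a k - 1)

lemma dirichletKernel_eq (a : Fin (n + 1) → ℝ) (s : ℝ) (x : Fin n → ℝ) :
    dirichletKernel a s x =
      (∏ i, x i ^ (a i.castSucc - 1)) * (s - ∑ i, x i) ^ (a (Fin.last n) - 1) := by
  simp [dirichletKernel, Fin.prod_univ_castSucc]

@[fun_prop]
lemma measurable_dirichletKernel (a : Fin (n + 1) → ℝ) (s : ℝ) :
    Measurable (dirichletKernel a s) := by
  unfold dirichletKernel
  fun_prop

lemma dirichletKernel_nonneg (a : Fin (n + 1) → ℝ) {x : Fin n → ℝ} (hx : x ∈ cornerSimplex n s) :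
    0 ≤ dirichletKernel a s x :=
  Finset.prod_nonneg fun k _ ↦ Real.rpow_nonneg (hx k).le _

lemma dirichletKernel_cons (a : Fin (n + 2) → ℝ) (s t : ℝ) (y : Fin n → ℝ) :
    dirichletKernel a s (Fin.cons t y) =
      t ^ (a 0 - 1) * dirichletKernel (Fin.tail a) (s - t) y := by
  simp [dirichletKernel, simplexCoords_cons, Fin.prod_univ_succ (n := n + 1), Fin.tail]

lemma dirichletKernel_add_single (a : Fin (n + 1) → ℝ) {k : Fin (n + 1)} {x : Fin n → ℝ}
    (hk : simplexCoords s x k ≠ 0) :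
    dirichletKernel (a + Pi.single k 1) s x = simplexCoords s x k * dirichletKernel a s x := by
  set θ := simplexCoords s x with hθ
  have factor_shift : ∀ i, θ i ^ ((a + Pi.single k 1 : Fin (n + 1) → ℝ) i - 1) =
      Pi.mulSingle (M := fun _ ↦ ℝ) k (θ k) i * θ i ^ (a i - 1) := fun i ↦ by
    obtain rfl | hi := eq_or_ne i k
    · simp [Real.rpow_sub_one hk, ← mul_div_assoc, mul_div_cancel_left₀ _ hk]
    · simp [hi]
  rw [dirichletKernel, dirichletKernel, ← hθ, Finset.prod_congr rfl fun i _ ↦ factor_shift i,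
    Finset.prod_mul_distrib, Fintype.prod_pi_mulSingle']

lemma lintegral_dirichletKernel {a : Fin (n + 1) → ℝ} (ha : ∀ k, 0 < a k) (hs : 0 < s) :
    ∫⁻ x in cornerSimplex n s, ENNReal.ofReal (dirichletKernel a s x) =
      ENNReal.ofReal (s ^ (∑ k, a k - 1) * multivariateBeta a) := by
  induction n generalizing s with
  | zero =>
    have simplex_univ : cornerSimplex 0 s = Set.univ := by simp [cornerSimplex_eq, hs]
    rw [simplex_univ, Measure.restrict_univ, volume_pi, Measure.pi_of_empty, lintegral_dirac]
    simp [dirichletKernel_eq, multivariateBeta, div_self (Real.Gamma_pos_of_pos (ha 0)).ne']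
  | succ n ih =>
    have tail_pos : ∀ k, 0 < Fin.tail a k := fun k ↦ ha k.succ
    have sum_tail_pos : 0 < ∑ k, Fin.tail a k :=
      Finset.sum_pos (fun k _ ↦ tail_pos k) Finset.univ_nonempty
    have slice : ∀ t ∈ Set.Ioo 0 s,
        ∫⁻ y in cornerSimplex n (s - t), ENNReal.ofReal (dirichletKernel a s (Fin.cons t y)) =
          ENNReal.ofReal (multivariateBeta (Fin.tail a)) *
            ENNReal.ofReal (t ^ (a 0 - 1) * (s - t) ^ (∑ k, Fin.tail a k - 1)) := fun t ht ↦ by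
      have power_nonneg : 0 ≤ t ^ (a 0 - 1) := Real.rpow_nonneg ht.1.le _
      rw [← ENNReal.ofReal_mul (multivariateBeta_pos tail_pos).le]
      simp_rw [dirichletKernel_cons, ENNReal.ofReal_mul power_nonneg]
      rw [lintegral_const_mul' _ _ ENNReal.ofReal_ne_top, ih tail_pos (sub_pos.2 ht.2),
        ← ENNReal.ofReal_mul power_nonneg, ← mul_assoc, mul_comm]
    rw [lintegral_cornerSimplex_succ (by fun_prop), setLIntegral_congr_fun measurableSet_Ioo slice,
      lintegral_const_mul' _ _ ENNReal.ofReal_ne_top,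
      lintegral_rpow_mul_sub_rpow (ha 0) sum_tail_pos hs,
      ← ENNReal.ofReal_mul (multivariateBeta_pos tail_pos).le,
      multivariateBeta_succ a sum_tail_pos, Fin.sum_univ_succ a]
    simp only [Fin.tail]
    ring_nf

lemma integral_dirichletKernel {a : Fin (n + 1) → ℝ} (ha : ∀ k, 0 < a k) (hs : 0 < s) :
    ∫ x in cornerSimplex n s, dirichletKernel a s x =
      s ^ (∑ k, a k - 1) * multivariateBeta a := by
  rw [integral_eq_lintegral_of_nonneg_ae _ (by fun_prop), lintegral_dirichletKernel ha hs,
    ENNReal.toReal_ofReal (mul_pos (Real.rpow_pos_of_pos hs _) (multivariateBeta_pos ha)).le]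
  exact ae_restrict_of_forall_mem (measurableSet_cornerSimplex _ _) fun _ ↦ dirichletKernel_nonneg a

lemma integral_simplexCoords_mul_dirichletKernel {a : Fin (n + 1) → ℝ} (ha : ∀ k, 0 < a k)
    (k : Fin (n + 1)) (hs : 0 < s) :
    ∫ x in cornerSimplex n s, simplexCoords s x k * dirichletKernel a s x =
      s ^ (∑ i, a i) * (a k / (∑ i, a i) * multivariateBeta a) := by
  have sum_pos : 0 < ∑ i, a i := Finset.sum_pos (fun i _ ↦ ha i) Finset.univ_nonempty
  have single_nonneg : (0 : Fin (n + 1) → ℝ) ≤ Pi.single k 1 := Pi.single_nonneg.2 zero_le_one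
  have shifted_pos : ∀ i, 0 < (a + Pi.single k 1 : Fin (n + 1) → ℝ) i := fun i ↦
    add_pos_of_pos_of_nonneg (ha i) (single_nonneg i)
  calc ∫ x in cornerSimplex n s, simplexCoords s x k * dirichletKernel a s x
    _ = ∫ x in cornerSimplex n s, dirichletKernel (a + Pi.single k 1) s x :=
      setIntegral_congr_fun (measurableSet_cornerSimplex n s) fun x hx ↦
        (dirichletKernel_add_single a (hx k).ne').symm
    _ = s ^ (∑ i, (a + Pi.single k 1 : Fin (n + 1) → ℝ) i - 1) *
        multivariateBeta (a + Pi.single k 1) :=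
      integral_dirichletKernel shifted_pos hs
    _ = s ^ (∑ i, a i) * (a k / (∑ i, a i) * multivariateBeta a) := by
      rw [multivariateBeta_add_single (ha k).ne' sum_pos.ne']
      simp [Finset.sum_add_distrib]

end DirichletKernel

theorem dirichlet_first_moment_general {n : ℕ} {a : Fin (n + 1) → ℝ} (ha : ∀ k, 0 < a k)
    (k : Fin (n + 1)) :
    ∫ x in cornerSimplex n 1, simplexCoords 1 x k * dirichletKernel a 1 x =
      (a k / ∑ i, a i) * ((∏ i, Real.Gamma (a i)) / Real.Gamma (∑ i, a i)) ∧
    (Real.Gamma (∑ i, a i) / ∏ i, Real.Gamma (a i)) *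
      ∫ x in cornerSimplex n 1, simplexCoords 1 x k * dirichletKernel a 1 x = a k / ∑ i, a i := by
  have moment := integral_simplexCoords_mul_dirichletKernel ha k one_pos
  rw [Real.one_rpow, one_mul] at moment
  refine ⟨moment, ?_⟩
  rw [moment, ← inv_div, ← multivariateBeta, mul_left_comm,
    inv_mul_cancel₀ (multivariateBeta_pos ha).ne', mul_one]

/-- First-moment integral of the Dirichlet kernel: integrating the `j`-th
coordinate against the Dirichlet kernel over the open corner simplex gives
`(a j / ∑ a) · (∏ Γ(a k)) / Γ(∑ a k)`; consequently the Dirichlet expectation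
of the `j`-th coordinate is `a j / a₀`. -/
theorem dirichlet_first_moment (K : ℕ) (hK : 1 ≤ K) (a : Fin K → ℝ)
    (ha : ∀ k, 0 < a k) (j : Fin (K - 1)) :
    (∫ x : Fin (K - 1) → ℝ in
        {x : Fin (K - 1) → ℝ | (∀ i, 0 < x i) ∧ ∑ i, x i < 1},
        x j * ((∏ i : Fin (K - 1), x i ^ (a (Fin.castLE (by omega) i) - 1)) *
          (1 - ∑ i, x i) ^ (a ⟨K - 1, by omega⟩ - 1))) =
      (a (Fin.castLE (by omega) j) / ∑ k, a k) *
        ((∏ k, Real.Gamma (a k)) / Real.Gamma (∑ k, a k)) ∧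
    (Real.Gamma (∑ k, a k) / ∏ k, Real.Gamma (a k)) *
      (∫ x : Fin (K - 1) → ℝ in
        {x : Fin (K - 1) → ℝ | (∀ i, 0 < x i) ∧ ∑ i, x i < 1},
        x j * ((∏ i : Fin (K - 1), x i ^ (a (Fin.castLE (by omega) i) - 1)) *
          (1 - ∑ i, x i) ^ (a ⟨K - 1, by omega⟩ - 1))) =
      a (Fin.castLE (by omega) j) / ∑ k, a k := by
  obtain ⟨n, rfl⟩ : ∃ n, K = n + 1 := ⟨K - 1, by omega⟩
  have h := dirichlet_first_moment_general ha j.castSucc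
  simp only [simplexCoords_castSucc, dirichletKernel_eq, cornerSimplex_eq] at h
  exact h
end

section
/- Let π, y ∈ Δ_{K−1}, let κ : Fin K → ℕ be counts with Σ_k κ_k = n > 0, and let 0 < n̲ ≤ n̄. Define the posterior mean path θ(n⁰)_k = (n⁰·y_k + κ_k)/(n⁰ + n) for n⁰ ∈ [n̲, n̄]. Then the maximum over n⁰ ∈ [n̲, n̄] of the total variation distance D_TV(π, θ(n⁰)) is attained at an endpoint: max_{n⁰ ∈ [n̲,n̄]} D_TV(π, θ(n⁰)) = max(D_TV(π, θ(n̲)), D_TV(π, θ(n̄))). The same endpoint attainment holds for the Jensen–Shannon divergence: max_{n⁰ ∈ [n̲,n̄]} D_JS(π, θ(n⁰)) = max(D_JS(π, θ(n̲)), D_JS(π, θ(n̄))). Hence the upper bounds of the interval-valued representativeness metrics are obtained by evaluating the discrepancy measures at the boundary values of the prior strength. -/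
/-- Total variation distance between categorical distributions. -/
noncomputable def TVdist {K : ℕ} (p q : Fin K → ℝ) : ℝ :=
  (1 / 2) * ∑ k, |p k - q k|

/-- Kullback–Leibler divergence between categorical distributions, with the
convention that a summand is `0` whenever `p k = 0`. -/
noncomputable def KLdiv {K : ℕ} (p q : Fin K → ℝ) : ℝ :=
  ∑ k, p k * Real.log (p k / q k)

/-- Jensen–Shannon divergence `D_JS(p,q) = ½ D_KL(p‖m) + ½ D_KL(q‖m)` with
`m = ½(p+q)`. -/
noncomputable def JSdiv {K : ℕ} (p q : Fin K → ℝ) : ℝ :=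
  (1 / 2) * KLdiv p (fun k => (1 / 2) * (p k + q k)) +
    (1 / 2) * KLdiv q (fun k => (1 / 2) * (p k + q k))

/-!
The posterior mean `θ t` satisfies `(t + n) • θ t = t • y + κ`, which is affine in `t`; hence `θ t`
lies on the segment joining `θ nlo` and `θ nhi` whenever `nlo ≤ t ≤ nhi`, although `θ` itself is
not affine. Both discrepancies are convex in their second argument, and a convex function on a
segment is bounded by the larger of its values at the ends. Convexity of the Jensen–Shannon
divergence is seen coordinatewise: with `H x = -x log x`, each coordinate contributes
`H ((p + q) / 2) - (H p + H q) / 2`, whose derivative `log (2 q / (p + q)) / 2` in `q` is increasing.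
-/

open Set

section ConvexAnalysis

variable {𝕜 ι β : Type*} [Semiring 𝕜] [PartialOrder 𝕜]

theorem isGreatest_image_Icc_of_mem_segment {E : Type*} [AddCommMonoid E] [SMul 𝕜 E] [Preorder ι]
    [LinearOrder β] {s : Set E} {f : E → β} (hf : QuasiconvexOn 𝕜 s f) {γ : ι → E} {a b : ι}
    (hab : a ≤ b) (ha : γ a ∈ s) (hb : γ b ∈ s)
    (hγ : ∀ t ∈ Icc a b, γ t ∈ segment 𝕜 (γ a) (γ b)) :
    IsGreatest ((fun t => f (γ t)) '' Icc a b) (max (f (γ a)) (f (γ b))) := by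
  constructor
  · rcases max_choice (f (γ a)) (f (γ b)) with h | h <;> rw [h]
    · exact mem_image_of_mem _ (left_mem_Icc.2 hab)
    · exact mem_image_of_mem _ (right_mem_Icc.2 hab)
  · rintro _ ⟨t, ht, rfl⟩
    obtain ⟨u, v, hu, hv, huv, h⟩ := hγ t ht
    simpa only [h] using (quasiconvexOn_iff_le_max.1 hf).2 ha hb hu hv huv

theorem convexOn_pi_sum [Fintype ι] {E : ι → Type*} [∀ i, AddCommMonoid (E i)]
    [∀ i, Module 𝕜 (E i)] [AddCommMonoid β] [PartialOrder β] [IsOrderedAddMonoid β] [Module 𝕜 β]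
    {s : ∀ i, Set (E i)} {f : ∀ i, E i → β} (hf : ∀ i, ConvexOn 𝕜 (s i) (f i)) :
    ConvexOn 𝕜 (univ.pi s) fun x => ∑ i, f i (x i) := by
  refine ⟨convex_pi fun i _ => (hf i).1, fun x hx y hy a b ha hb hab => ?_⟩
  simp only [Finset.smul_sum, ← Finset.sum_add_distrib]
  exact Finset.sum_le_sum fun i _ =>
    (hf i).2 (hx i (mem_univ i)) (hy i (mem_univ i)) ha hb hab

end ConvexAnalysis

section PosteriorMean

variable {ι : Type*} {y κ : ι → ℝ} {n : ℝ}

/-- The posterior mean of the Dirichlet–multinomial model with prior mean `y`, counts `κ`, total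
count `n` and prior strength `t`. Counts are real, and `n` is not tied to `κ`. -/
noncomputable def posteriorMean (y κ : ι → ℝ) (n t : ℝ) : ι → ℝ :=
  fun k => (t * y k + κ k) / (t + n)

theorem posteriorMean_nonneg (hy : 0 ≤ y) (hκ : 0 ≤ κ) {t : ℝ} (ht : 0 ≤ t) (htn : 0 ≤ t + n) :
    0 ≤ posteriorMean y κ n t :=
  fun k => div_nonneg (add_nonneg (mul_nonneg ht (hy k)) (hκ k)) htn

theorem posteriorMean_mem_segment {a b t : ℝ} (han : 0 < a + n) (ht : t ∈ Icc a b) :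
    posteriorMean y κ n t ∈ segment ℝ (posteriorMean y κ n a) (posteriorMean y κ n b) := by
  have htn : 0 < t + n := by linarith [ht.1]
  have hbn : 0 < b + n := by linarith [ht.2]
  rw [← segment_eq_Icc (ht.1.trans ht.2)] at ht
  obtain ⟨u, v, hu, hv, huv, h⟩ := ht
  simp only [smul_eq_mul] at h
  -- Multiplying by the denominators makes the path affine, so the weights pick them up.
  refine ⟨u * (a + n) / (t + n), v * (b + n) / (t + n), by positivity, by positivity, ?_, ?_⟩
  · rw [← add_div, div_eq_one_iff_eq htn.ne']
    linear_combination h + n * huv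
  · funext k
    simp only [posteriorMean, Pi.add_apply, Pi.smul_apply, smul_eq_mul]
    field_simp
    linear_combination y k * h + κ k * huv

theorem isGreatest_image_posteriorMean {β : Type*} [LinearOrder β] {s : Set (ι → ℝ)}
    {D : (ι → ℝ) → β} (hD : QuasiconvexOn ℝ s D) {a b : ℝ} (han : 0 < a + n) (hab : a ≤ b)
    (ha : posteriorMean y κ n a ∈ s) (hb : posteriorMean y κ n b ∈ s) :
    IsGreatest ((fun t => D (posteriorMean y κ n t)) '' Icc a b)
      (max (D (posteriorMean y κ n a)) (D (posteriorMean y κ n b))) :=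
  isGreatest_image_Icc_of_mem_segment hD hab ha hb fun _ => posteriorMean_mem_segment han

end PosteriorMean

section EntropyGap

open Real

/-- The Jensen gap at the midpoint of `p` and `q` for the entropy function `x ↦ -x log x`: the
contribution of one category with masses `p` and `q` to the Jensen–Shannon divergence. -/
noncomputable def entropyGap (p q : ℝ) : ℝ :=
  negMulLog ((p + q) / 2) - (negMulLog p + negMulLog q) / 2

theorem hasDerivAt_entropyGap {p q : ℝ} (hp : 0 ≤ p) (hq : 0 < q) :
    HasDerivAt (entropyGap p) ((log q - log ((p + q) / 2)) / 2) q := by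
  have hmid : HasDerivAt (fun x => (p + x) / 2) (1 / 2) q :=
    ((hasDerivAt_id q).const_add p).div_const 2
  have hgap := ((hasDerivAt_negMulLog (by positivity)).comp q hmid).sub
    (((hasDerivAt_negMulLog hq.ne').const_add (negMulLog p)).div_const 2)
  exact hgap.congr_deriv (by ring)

theorem continuous_entropyGap (p : ℝ) : Continuous (entropyGap p) := by
  unfold entropyGap
  fun_prop

theorem monotoneOn_log_sub_log_midpoint {p : ℝ} (hp : 0 ≤ p) :
    MonotoneOn (fun q => log q - log ((p + q) / 2)) (Ioi 0) := by
  intro a (ha : 0 < a) b (hb : 0 < b) hab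
  have hratio : a / ((p + a) / 2) ≤ b / ((p + b) / 2) := by
    rw [div_le_div_iff₀ (by positivity) (by positivity)]
    linarith [mul_le_mul_of_nonneg_right hab hp]
  simpa only [log_div ha.ne' (by positivity : (p + a) / 2 ≠ 0),
    log_div hb.ne' (by positivity : (p + b) / 2 ≠ 0)] using log_le_log (by positivity) hratio

theorem convexOn_entropyGap {p : ℝ} (hp : 0 ≤ p) : ConvexOn ℝ (Ici 0) (entropyGap p) := by
  refine MonotoneOn.convexOn_of_deriv (convex_Ici 0) (continuous_entropyGap p).continuousOn ?_ ?_
    <;> rw [interior_Ici]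
  · exact fun q hq => (hasDerivAt_entropyGap hp hq).differentiableAt.differentiableWithinAt
  · intro a ha b hb hab
    rw [(hasDerivAt_entropyGap hp ha).deriv, (hasDerivAt_entropyGap hp hb).deriv]
    exact div_le_div_of_nonneg_right (monotoneOn_log_sub_log_midpoint hp ha hb hab) zero_le_two

end EntropyGap

section Discrepancies

open Real

theorem convexOn_TVdist {K : ℕ} (p : Fin K → ℝ) : ConvexOn ℝ univ (TVdist p) := by
  have hsum := convexOn_pi_sum fun k => convexOn_univ_dist (p k)
  rw [pi_univ] at hsum
  refine (hsum.smul (by norm_num : (0 : ℝ) ≤ 1 / 2)).congr fun q _ => ?_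
  simp only [TVdist, dist_comm (q _), Real.dist_eq, smul_eq_mul]

theorem mul_log_div_eq {x m : ℝ} (h : m = 0 → x = 0) :
    x * log (x / m) = -negMulLog x - x * log m := by
  rcases eq_or_ne x 0 with rfl | hx
  · simp
  · rw [log_div hx (mt h hx), negMulLog]
    ring

theorem JSdiv_eq_sum_entropyGap {K : ℕ} {p q : Fin K → ℝ} (hp : 0 ≤ p) (hq : 0 ≤ q) :
    JSdiv p q = ∑ k, entropyGap (p k) (q k) := by
  simp only [JSdiv, KLdiv, Finset.mul_sum, ← Finset.sum_add_distrib]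
  refine Finset.sum_congr rfl fun k _ => ?_
  have hpk : 0 ≤ p k := hp k
  have hqk : 0 ≤ q k := hq k
  rw [mul_log_div_eq (x := p k) fun _ => by linarith,
    mul_log_div_eq (x := q k) fun _ => by linarith]
  simp only [entropyGap, negMulLog, one_div_mul_eq_div]
  ring

theorem convexOn_JSdiv {K : ℕ} {p : Fin K → ℝ} (hp : 0 ≤ p) : ConvexOn ℝ (Ici 0) (JSdiv p) := by
  have hsum := convexOn_pi_sum fun k => convexOn_entropyGap (hp k)
  rw [pi_univ_Ici] at hsum
  exact hsum.congr fun q hq => (JSdiv_eq_sum_entropyGap hp hq).symm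

end Discrepancies

theorem discrepancy_max_attained_at_endpoints_general {K : ℕ} {π y κ : Fin K → ℝ}
    (hπ : 0 ≤ π) (hy : 0 ≤ y) (hκ : 0 ≤ κ) {n nlo nhi : ℝ}
    (hlo : 0 ≤ nlo) (hlon : 0 < nlo + n) (hlohi : nlo ≤ nhi) :
    IsGreatest ((fun t => TVdist π (posteriorMean y κ n t)) '' Icc nlo nhi)
      (max (TVdist π (posteriorMean y κ n nlo)) (TVdist π (posteriorMean y κ n nhi))) ∧
    IsGreatest ((fun t => JSdiv π (posteriorMean y κ n t)) '' Icc nlo nhi)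
      (max (JSdiv π (posteriorMean y κ n nlo)) (JSdiv π (posteriorMean y κ n nhi))) :=
  ⟨isGreatest_image_posteriorMean (convexOn_TVdist π).quasiconvexOn hlon hlohi
      (mem_univ _) (mem_univ _),
    isGreatest_image_posteriorMean (convexOn_JSdiv hπ).quasiconvexOn hlon hlohi
      (posteriorMean_nonneg hy hκ hlo hlon.le)
      (posteriorMean_nonneg hy hκ (hlo.trans hlohi) (by linarith))⟩

/-- Along the posterior-mean path `θ(n⁰)_k = (n⁰ y_k + κ_k)/(n⁰+n)`, the maxima
over `n⁰ ∈ [n̲, n̄]` of both `D_TV(π, θ(n⁰))` and `D_JS(π, θ(n⁰))` are attained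
at the endpoints of the prior-strength interval. -/
theorem discrepancy_max_attained_at_endpoints (K : ℕ) (π y : Fin K → ℝ)
    (hπ0 : ∀ k, 0 ≤ π k) (hπ1 : ∑ k, π k = 1)
    (hy0 : ∀ k, 0 ≤ y k) (hy1 : ∑ k, y k = 1)
    (κ : Fin K → ℕ) (n : ℕ) (hκn : ∑ k, κ k = n) (hn : 0 < n)
    (nlo nhi : ℝ) (hlo : 0 < nlo) (hlohi : nlo ≤ nhi) :
    IsGreatest
      ((fun n0 : ℝ =>
          TVdist π (fun k => (n0 * y k + κ k) / (n0 + n))) '' Set.Icc nlo nhi)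
      (max (TVdist π (fun k => (nlo * y k + κ k) / (nlo + n)))
        (TVdist π (fun k => (nhi * y k + κ k) / (nhi + n)))) ∧
    IsGreatest
      ((fun n0 : ℝ =>
          JSdiv π (fun k => (n0 * y k + κ k) / (n0 + n))) '' Set.Icc nlo nhi)
      (max (JSdiv π (fun k => (nlo * y k + κ k) / (nlo + n)))
        (JSdiv π (fun k => (nhi * y k + κ k) / (nhi + n)))) :=
  discrepancy_max_attained_at_endpoints_general hπ0 hy0 (fun k => (κ k).cast_nonneg) hlo.le
    (by positivity) hlohi
end

section
/- Let Y ⊆ Δ_{K−1} be a convex set of prior mean vectors, let 0 < n̲ ≤ n̄, and let κ ∈ ℝ^K be a fixed count vector. Then the set of posterior Dirichlet parameters {n⁰·y + κ : y ∈ Y, n⁰ ∈ [n̲, n̄]} is a convex subset of ℝ^K; that is, the affine conjugate update of a convex credal prior set yields a convex posterior parameter set, as asserted in Theorem 1. -/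
/-!
A convex combination `a n₁ y₁ + b n₂ y₂` of scaled points has nonnegative weights `a n₁` and `b n₂`
on `y₁` and `y₂`. It is therefore `a n₁ + b n₂`, an admissible strength, times a renormalised convex
combination of `y₁` and `y₂`.
-/

section

open scoped Pointwise

variable {𝕜 E : Type*} [Field 𝕜] [LinearOrder 𝕜] [IsStrictOrderedRing 𝕜] [AddCommGroup E]
  [Module 𝕜 E]

theorem convex_set_smul_of_nonneg {N : Set 𝕜} {Y : Set E} (hN : Convex 𝕜 N)
    (hN_nonneg : ∀ n ∈ N, 0 ≤ n) (hY : Convex 𝕜 Y) : Convex 𝕜 (N • Y) := by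
  rintro _ ⟨n₁, hn₁, y₁, hy₁, rfl⟩ _ ⟨n₂, hn₂, y₂, hy₂, rfl⟩ a b ha hb hab
  obtain ⟨y, hy, hy_eq⟩ := hY.exists_mem_add_smul_eq hy₁ hy₂
    (mul_nonneg ha (hN_nonneg n₁ hn₁)) (mul_nonneg hb (hN_nonneg n₂ hn₂))
  exact ⟨a * n₁ + b * n₂, hN hn₁ hn₂ ha hb hab, y, hy, by simpa only [mul_smul] using hy_eq⟩

theorem posterior_parameter_set_convex_general {N : Set 𝕜} {Y : Set E} (hN : Convex 𝕜 N)
    (hN_nonneg : ∀ n ∈ N, 0 ≤ n) (hY : Convex 𝕜 Y) (κ : E) :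
    Convex 𝕜 {z : E | ∃ y ∈ Y, ∃ n ∈ N, z = n • y + κ} := by
  have eq_smul_add : {z : E | ∃ y ∈ Y, ∃ n ∈ N, z = n • y + κ} = N • Y + {κ} := by
    ext z
    constructor
    · rintro ⟨y, hy, n, hn, rfl⟩
      exact Set.add_mem_add (Set.smul_mem_smul hn hy) rfl
    · rintro ⟨_, ⟨n, hn, y, hy, rfl⟩, _, rfl, rfl⟩
      exact ⟨y, hy, n, hn, rfl⟩
  rw [eq_smul_add]
  exact (convex_set_smul_of_nonneg hN hN_nonneg hY).add (convex_singleton κ)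

end

/-- The affine conjugate update of a convex credal prior set yields a convex
posterior parameter set: if `Y ⊆ Δ_{K−1}` is convex and `0 < n̲ ≤ n̄`, then
`{n⁰·y + κ : y ∈ Y, n⁰ ∈ [n̲, n̄]}` is convex in `ℝ^K`. -/
theorem posterior_parameter_set_convex (K : ℕ) (Y : Set (Fin K → ℝ))
    (hYsub : Y ⊆ {θ : Fin K → ℝ | (∀ k, 0 ≤ θ k) ∧ ∑ k, θ k = 1})
    (hYconv : Convex ℝ Y) (nlo nhi : ℝ) (hlo : 0 < nlo) (hlohi : nlo ≤ nhi)
    (κ : Fin K → ℝ) :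
    Convex ℝ {z : Fin K → ℝ |
      ∃ y ∈ Y, ∃ n0 ∈ Set.Icc nlo nhi, z = fun k => n0 * y k + κ k} :=
  posterior_parameter_set_convex_general (convex_Icc nlo nhi)
    (fun _ hn => hlo.le.trans hn.1) hYconv κ
end

section
/- Let 0 < x < 1 and b > 0. For a > 0 define the regularized incomplete beta function I_x(a,b) = (∫_0^x t^(a−1)·(1−t)^(b−1) dt) / (∫_0^1 t^(a−1)·(1−t)^(b−1) dt), i.e. the cumulative distribution function at x of the Beta(a,b) distribution. Then: (i) for fixed b > 0, a ↦ I_x(a,b) is strictly decreasing on (0,∞): if 0 < a₁ < a₂ then I_x(a₂,b) < I_x(a₁,b); and (ii) for fixed a > 0, b ↦ I_x(a,b) is strictly increasing on (0,∞): if 0 < b₁ < b₂ then I_x(a,b₁) < I_x(a,b₂). Thus the Beta posterior CDF is monotone in each of its shape parameters, which is the monotonicity used to obtain the lower and upper marginal posterior envelopes at the extreme prior configurations in Theorem 1. -/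
/-!
Monotone likelihood ratio: let `f`, `g` be unnormalised densities with `g / f` strictly
increasing, and let `c` be the value of the ratio at `x`. Then `g < c * f` to the left of `x` and
`c * f ≤ g` to the right of it, so `g` gives the left part a smaller share of its total mass than
`f` does. For two Beta densities the ratio is `t ^ (a₂ - a₁) * (1 - t) ^ (b₂ - b₁)`: raising `a`
alone, or lowering `b` alone, makes it strictly increasing.
-/

open MeasureTheory

/-- The regularized incomplete beta function `I_x(a,b)`: the CDF at `x` of the
Beta(a,b) distribution. -/
noncomputable def regIncBeta (a b x : ℝ) : ℝ :=
  (∫ t in Set.Ioo (0 : ℝ) x, t ^ (a - 1) * (1 - t) ^ (b - 1)) /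
    (∫ t in Set.Ioo (0 : ℝ) 1, t ^ (a - 1) * (1 - t) ^ (b - 1))

open Set

section MonotoneLikelihoodRatio

variable {α : Type*} [MeasurableSpace α] {μ : Measure α} {s t : Set α} {f g : α → ℝ}

theorem setIntegral_lt_setIntegral (hs : MeasurableSet s) (hμs : μ s ≠ 0)
    (hf : IntegrableOn f s μ) (hg : IntegrableOn g s μ) (hfg : ∀ y ∈ s, f y < g y) :
    ∫ y in s, f y ∂μ < ∫ y in s, g y ∂μ := by
  have hsub_nonneg : 0 ≤ᵐ[μ.restrict s] fun y ↦ g y - f y := by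
    filter_upwards [ae_restrict_mem hs] with y hy using sub_nonneg.2 (hfg y hy).le
  have hsubset : s ⊆ Function.support (fun y ↦ g y - f y) ∩ s :=
    fun y hy ↦ ⟨(sub_pos.2 (hfg y hy)).ne', hy⟩
  rw [← sub_pos, ← integral_sub hg hf,
    setIntegral_pos_iff_support_of_nonneg_ae hsub_nonneg (hg.sub hf)]
  exact hμs.bot_lt.trans_le (measure_mono hsubset)

theorem setIntegral_pos (hs : MeasurableSet s) (hμs : μ s ≠ 0) (hf : IntegrableOn f s μ)
    (hf_pos : ∀ y ∈ s, 0 < f y) : 0 < ∫ y in s, f y ∂μ := by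
  simpa using setIntegral_lt_setIntegral hs hμs integrableOn_zero hf hf_pos

theorem setIntegral_mul_setIntegral_lt_of_threshold {c : ℝ} (hs : MeasurableSet s)
    (ht : MeasurableSet t) (hμs : μ s ≠ 0)
    (hfs : IntegrableOn f s μ) (hft : IntegrableOn f t μ)
    (hgs : IntegrableOn g s μ) (hgt : IntegrableOn g t μ)
    (hf_nonneg : 0 ≤ ∫ y in s, f y ∂μ) (hf_pos : 0 < ∫ y in t, f y ∂μ)
    (hlt : ∀ y ∈ s, g y < c * f y) (hle : ∀ y ∈ t, c * f y ≤ g y) :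
    (∫ y in s, g y ∂μ) * ∫ y in t, f y ∂μ < (∫ y in s, f y ∂μ) * ∫ y in t, g y ∂μ := by
  have hs_lt : ∫ y in s, g y ∂μ < c * ∫ y in s, f y ∂μ := by
    rw [← integral_const_mul]
    exact setIntegral_lt_setIntegral hs hμs hgs (hfs.const_mul c) hlt
  have ht_le : c * ∫ y in t, f y ∂μ ≤ ∫ y in t, g y ∂μ := by
    rw [← integral_const_mul]
    exact setIntegral_mono_on (hft.const_mul c) hgt ht hle
  calc
    (∫ y in s, g y ∂μ) * ∫ y in t, f y ∂μ
      < (c * ∫ y in s, f y ∂μ) * ∫ y in t, f y ∂μ := by gcongr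
    _ = (∫ y in s, f y ∂μ) * (c * ∫ y in t, f y ∂μ) := by ring
    _ ≤ (∫ y in s, f y ∂μ) * ∫ y in t, g y ∂μ := by gcongr

theorem setIntegral_inter_Iio_div_lt_of_strictMonoOn_div [LinearOrder α] [TopologicalSpace α]
    [OrderClosedTopology α] [OpensMeasurableSpace α] {x : α} (hs : MeasurableSet s) (hx : x ∈ s)
    (hμ_Iio : μ (s ∩ Iio x) ≠ 0) (hμ_diff : μ (s \ Iio x) ≠ 0)
    (hf : IntegrableOn f s μ) (hg : IntegrableOn g s μ)
    (hf_pos : ∀ y ∈ s, 0 < f y) (hg_nonneg : ∀ y ∈ s, 0 ≤ g y)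
    (hmono : StrictMonoOn (fun y ↦ g y / f y) s) :
    (∫ y in s ∩ Iio x, g y ∂μ) / ∫ y in s, g y ∂μ <
      (∫ y in s ∩ Iio x, f y ∂μ) / ∫ y in s, f y ∂μ := by
  have hIio : MeasurableSet (s ∩ Iio x) := hs.inter measurableSet_Iio
  have hdiff : MeasurableSet (s \ Iio x) := hs.diff measurableSet_Iio
  have hf_Iio := hf.mono_set (inter_subset_left (t := Iio x))
  have hf_diff := hf.mono_set (sdiff_subset (t := Iio x))
  have hg_Iio := hg.mono_set (inter_subset_left (t := Iio x))
  have hg_diff := hg.mono_set (sdiff_subset (t := Iio x))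
  have hf_Iio_pos := setIntegral_pos hIio hμ_Iio hf_Iio fun y hy ↦ hf_pos y hy.1
  have hf_diff_pos := setIntegral_pos hdiff hμ_diff hf_diff fun y hy ↦ hf_pos y hy.1
  have hg_Iio_nonneg := setIntegral_nonneg (μ := μ) hIio fun y hy ↦ hg_nonneg y hy.1
  have hcross : (∫ y in s ∩ Iio x, g y ∂μ) * ∫ y in s \ Iio x, f y ∂μ <
      (∫ y in s ∩ Iio x, f y ∂μ) * ∫ y in s \ Iio x, g y ∂μ :=
    setIntegral_mul_setIntegral_lt_of_threshold (c := g x / f x) hIio hdiff hμ_Iio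
      hf_Iio hf_diff hg_Iio hg_diff hf_Iio_pos.le hf_diff_pos
      (fun y hy ↦ (div_lt_iff₀ (hf_pos y hy.1)).1 (hmono hy.1 hx hy.2))
      (fun y hy ↦ (le_div_iff₀ (hf_pos y hy.1)).1 (hmono.monotoneOn hx hy.1 (not_lt.1 hy.2)))
  have hg_diff_pos : 0 < ∫ y in s \ Iio x, g y ∂μ :=
    pos_of_mul_pos_right ((mul_nonneg hg_Iio_nonneg hf_diff_pos.le).trans_lt hcross) hf_Iio_pos.le
  rw [← integral_inter_add_sdiff measurableSet_Iio hf,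
    ← integral_inter_add_sdiff measurableSet_Iio hg,
    div_lt_div_iff₀ (by positivity) (by positivity)]
  linarith

end MonotoneLikelihoodRatio

/-- The unnormalised density of the Beta(a,b) distribution. It has this meaning on `(0,1)` only:
elsewhere the real powers take conventional values. -/
noncomputable def betaKernel (a b t : ℝ) : ℝ := t ^ (a - 1) * (1 - t) ^ (b - 1)

theorem regIncBeta_eq_setIntegral_betaKernel_div (a b x : ℝ) :
    regIncBeta a b x = (∫ t in Ioo 0 x, betaKernel a b t) / ∫ t in Ioo 0 1, betaKernel a b t :=
  rfl

theorem betaKernel_pos (a b : ℝ) {t : ℝ} (ht : t ∈ Ioo 0 1) : 0 < betaKernel a b t :=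
  mul_pos (Real.rpow_pos_of_pos ht.1 _) (Real.rpow_pos_of_pos (sub_pos.2 ht.2) _)

theorem integrableOn_betaKernel {a b : ℝ} (ha : 0 < a) (hb : 0 < b) :
    IntegrableOn (betaKernel a b) (Ioo 0 1) := by
  have hconv := Complex.betaIntegral_convergent (u := a) (v := b) (by simpa) (by simpa)
  rw [intervalIntegrable_iff_integrableOn_Ioo_of_le zero_le_one] at hconv
  refine IntegrableOn.congr_fun hconv.re (fun t ht ↦ ?_) measurableSet_Ioo
  have hofReal : (t : ℂ) ^ ((a : ℂ) - 1) * (1 - (t : ℂ)) ^ ((b : ℂ) - 1) = betaKernel a b t := by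
    simp [betaKernel, Complex.ofReal_cpow ht.1.le, Complex.ofReal_cpow (sub_pos.2 ht.2).le]
  rw [hofReal]
  exact Complex.ofReal_re _

theorem betaKernel_div_betaKernel (a₁ a₂ b₁ b₂ : ℝ) {t : ℝ} (ht : t ∈ Ioo 0 1) :
    betaKernel a₂ b₂ t / betaKernel a₁ b₁ t = t ^ (a₂ - a₁) * (1 - t) ^ (b₂ - b₁) := by
  rw [betaKernel, betaKernel, mul_div_mul_comm, ← Real.rpow_sub ht.1,
    ← Real.rpow_sub (sub_pos.2 ht.2), sub_sub_sub_cancel_right, sub_sub_sub_cancel_right]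

theorem strictMonoOn_betaKernel_div_left {a₁ a₂ : ℝ} (b : ℝ) (ha : a₁ < a₂) :
    StrictMonoOn (fun t ↦ betaKernel a₂ b t / betaKernel a₁ b t) (Ioo 0 1) := by
  intro t ht u hu htu
  simp only [betaKernel_div_betaKernel, ht, hu, sub_self, Real.rpow_zero, mul_one]
  exact Real.rpow_lt_rpow ht.1.le htu (sub_pos.2 ha)

theorem strictMonoOn_betaKernel_div_right (a : ℝ) {b₁ b₂ : ℝ} (hb : b₁ < b₂) :
    StrictMonoOn (fun t ↦ betaKernel a b₁ t / betaKernel a b₂ t) (Ioo 0 1) := by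
  intro t ht u hu htu
  simp only [betaKernel_div_betaKernel, ht, hu, sub_self, Real.rpow_zero, one_mul]
  exact Real.rpow_lt_rpow_of_neg (sub_pos.2 hu.2) (sub_lt_sub_left htu 1) (sub_neg.2 hb)

theorem regIncBeta_lt_of_strictMonoOn_betaKernel_div {a₁ a₂ b₁ b₂ x : ℝ} (ha₁ : 0 < a₁)
    (ha₂ : 0 < a₂) (hb₁ : 0 < b₁) (hb₂ : 0 < b₂) (hx : x ∈ Ioo 0 1)
    (hmono : StrictMonoOn (fun t ↦ betaKernel a₂ b₂ t / betaKernel a₁ b₁ t) (Ioo 0 1)) :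
    regIncBeta a₂ b₂ x < regIncBeta a₁ b₁ x := by
  have hIio : Ioo 0 1 ∩ Iio x = Ioo 0 x := by rw [Ioo_inter_Iio, min_eq_right hx.2.le]
  have hIco : Ioo 0 1 \ Iio x = Ico x 1 := by
    ext t
    simp only [mem_sdiff, mem_Ioo, mem_Iio, mem_Ico, not_lt]
    exact ⟨fun ht ↦ ⟨ht.2, ht.1.2⟩, fun ht ↦ ⟨⟨hx.1.trans_le ht.1, ht.2⟩, ht.1⟩⟩
  have hvol_left : volume (Ioo 0 1 ∩ Iio x) ≠ 0 := by simpa [hIio] using hx.1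
  have hvol_right : volume (Ioo 0 1 \ Iio x) ≠ 0 := by simpa [hIco] using hx.2
  rw [regIncBeta_eq_setIntegral_betaKernel_div, regIncBeta_eq_setIntegral_betaKernel_div, ← hIio]
  exact setIntegral_inter_Iio_div_lt_of_strictMonoOn_div measurableSet_Ioo hx hvol_left hvol_right
    (integrableOn_betaKernel ha₁ hb₁) (integrableOn_betaKernel ha₂ hb₂)
    (fun _ ↦ betaKernel_pos a₁ b₁) (fun _ ht ↦ (betaKernel_pos a₂ b₂ ht).le) hmono

theorem strictAntiOn_regIncBeta_left {b x : ℝ} (hb : 0 < b) (hx : x ∈ Ioo 0 1) :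
    StrictAntiOn (fun a ↦ regIncBeta a b x) (Ioi 0) :=
  fun _ ha₁ _ ha₂ ha ↦ regIncBeta_lt_of_strictMonoOn_betaKernel_div ha₁ ha₂ hb hb hx
    (strictMonoOn_betaKernel_div_left b ha)

theorem strictMonoOn_regIncBeta_right {a x : ℝ} (ha : 0 < a) (hx : x ∈ Ioo 0 1) :
    StrictMonoOn (fun b ↦ regIncBeta a b x) (Ioi 0) :=
  fun _ hb₁ _ hb₂ hb ↦ regIncBeta_lt_of_strictMonoOn_betaKernel_div ha ha hb₂ hb₁ hx
    (strictMonoOn_betaKernel_div_right a hb)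

/-- For `0 < x < 1`, the regularized incomplete beta function `I_x(a,b)` is
strictly decreasing in the first shape parameter `a` (for fixed `b > 0`) and
strictly increasing in the second shape parameter `b` (for fixed `a > 0`). -/
theorem regIncBeta_monotone_in_shape_parameters (x : ℝ)
    (hx0 : 0 < x) (hx1 : x < 1) :
    (∀ b : ℝ, 0 < b → ∀ a₁ a₂ : ℝ, 0 < a₁ → a₁ < a₂ →
      regIncBeta a₂ b x < regIncBeta a₁ b x) ∧
    (∀ a : ℝ, 0 < a → ∀ b₁ b₂ : ℝ, 0 < b₁ → b₁ < b₂ →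
      regIncBeta a b₁ x < regIncBeta a b₂ x) := by
  constructor
  · intro b hb a₁ a₂ ha₁ ha
    exact strictAntiOn_regIncBeta_left hb ⟨hx0, hx1⟩ ha₁ (ha₁.trans ha) ha
  · intro a ha b₁ b₂ hb₁ hb
    exact strictMonoOn_regIncBeta_right ha ⟨hx0, hx1⟩ hb₁ (hb₁.trans hb) hb
end
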